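/- arXiv:1712.05212 — 2 statements merged into one kernel-verified Lean document; each statement's English description precedes it below -/
import Mathlib

section
/- For every set X ⊆ ω^ω of cardinality 𝔠 (the cardinality of the continuum) there exists a set A ⊆ X such that A belongs to the tree ideal l₀ and A has cardinality 𝔠. -/
open Cardinal Set

/-- A tree on ω: a nonempty set of finite sequences closed under initial segments. -/
def IsTree (T : Set (List ℕ)) : Prop :=
  T.Nonempty ∧ ∀ s ∈ T, ∀ n : ℕ, s.take n ∈ T

/-- The body of a tree: all infinite branches. -/
def treeBody (T : Set (List ℕ)) : Set (ℕ → ℕ) :=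
  {x | ∀ n : ℕ, (List.ofFn fun i : Fin n => x i) ∈ T}

/-- Immediate successors of a node in a tree. -/
def succs (T : Set (List ℕ)) (t : List ℕ) : Set ℕ := {n | t ++ [n] ∈ T}

/-- Sacks (perfect) tree: every node has an extension with at least two immediate successors. -/
def IsSacksTree (T : Set (List ℕ)) : Prop :=
  IsTree T ∧ ∀ s ∈ T, ∃ t ∈ T, s <+: t ∧ (succs T t).Nontrivial

/-- Miller tree: every node has an extension with infinitely many immediate successors. -/
def IsMillerTree (T : Set (List ℕ)) : Prop :=
  IsTree T ∧ ∀ s ∈ T, ∃ t ∈ T, s <+: t ∧ (succs T t).Infinite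

/-- Laver tree: has a stem (a node comparable with every node) such that every node
extending the stem has infinitely many immediate successors. -/
def IsLaverTree (T : Set (List ℕ)) : Prop :=
  IsTree T ∧ ∃ s ∈ T, (∀ t ∈ T, s <+: t ∨ t <+: s) ∧
    ∀ t ∈ T, s <+: t → (succs T t).Infinite

/-- Complete Laver tree: every node has infinitely many immediate successors. -/
def IsCompleteLaverTree (T : Set (List ℕ)) : Prop :=
  IsTree T ∧ ∀ t ∈ T, (succs T t).Infinite

/-- The tree ideal t₀ associated with a family of trees 𝕋. -/
def treeIdeal (𝕋 : Set (Set (List ℕ))) : Set (Set (ℕ → ℕ)) :=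
  {A | ∀ P ∈ 𝕋, ∃ Q ∈ 𝕋, Q ⊆ P ∧ treeBody Q ∩ A = ∅}

/-- t-measurability with respect to a family of trees 𝕋. -/
def TMeasurable (𝕋 : Set (Set (List ℕ))) (A : Set (ℕ → ℕ)) : Prop :=
  ∀ P ∈ 𝕋, ∃ Q ∈ 𝕋, Q ⊆ P ∧ (treeBody Q ⊆ A ∨ treeBody Q ∩ A = ∅)

/-- 𝕋-Bernstein set: meets and omits the body of every tree in 𝕋. -/
def TBernstein (𝕋 : Set (Set (List ℕ))) (B : Set (ℕ → ℕ)) : Prop :=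
  ∀ T ∈ 𝕋, (B ∩ treeBody T).Nonempty ∧ (B \ treeBody T).Nonempty

/-!
Fix `X ∉ l₀`, so that some Laver tree `P` has `[Q] ∩ X ∉ l₀`, hence `|[Q] ∩ X| = 𝔠`, for all Laver
trees `Q ⊆ P`. Colour the nodes of `P` with two colours so that every `ξ ∈ 2^ω` is the colour
sequence of all branches of some Laver tree `R_ξ ⊆ P`; the sets `[R_ξ]` are pairwise disjoint. The
heart of the matter is that every Laver tree `T` contains a Laver tree `Q_T` on which colour
sequences determine branches, up to countably many exceptional colour sequences. For this, extend
the colouring to limits along ultrafilters, which assigns to each node `t` a point `g t` of a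
compact metric space such that `g (t ⌢ k) → g t` in `k`, and thin `T` out so that the jumps from
`g t` to `g (t ⌢ k)` have pairwise incomparable sizes: then the limit of `g` along a branch
tells where the branch makes its jumps. Hence fewer than `𝔠` of the sets `[Q_T]` meet some `[R_ξ]`
in fewer than `𝔠` points and so do not cover `X`. A Luzin-type recursion yields `A ⊆ X` of size `𝔠`
meeting each `[Q_T]` in fewer than `𝔠` points, and sets with fewer than `𝔠` points belong to `l₀`.
-/

open Filter Topology

/-! ### Initial segments of branches -/

/-- The initial segment of length `n` of `x`, in the form in which it occurs in `treeBody`. -/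
def initSeg (x : ℕ → ℕ) (n : ℕ) : List ℕ := List.ofFn fun i : Fin n => x i

section InitSeg

variable {x y : ℕ → ℕ} {m n : ℕ}

@[simp]
theorem length_initSeg (x : ℕ → ℕ) (n : ℕ) : (initSeg x n).length = n := List.length_ofFn

theorem initSeg_succ (x : ℕ → ℕ) (n : ℕ) : initSeg x (n + 1) = initSeg x n ++ [x n] := by
  simp only [initSeg, List.ofFn_succ_last, Fin.val_castSucc, Fin.val_last]

theorem take_initSeg (x : ℕ → ℕ) (h : m ≤ n) : (initSeg x n).take m = initSeg x m :=
  List.ext_getElem (by simp [h]) fun i _ _ => by simp [initSeg]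

theorem eq_of_forall_exists_ge_initSeg_eq
    (h : ∀ m, ∃ n ≥ m, initSeg x n = initSeg y n) : x = y := by
  funext i
  obtain ⟨n, hin, hn⟩ := h (i + 1)
  exact congrFun (List.ofFn_injective hn) ⟨i, hin⟩

theorem eq_of_forall_exists_gt_initSeg_eq {k : ℕ} (hk : initSeg x k = initSeg y k)
    (h : ∀ m ≥ k, initSeg x m = initSeg y m → ∃ n > m, initSeg x n = initSeg y n) : x = y := by
  refine eq_of_forall_exists_ge_initSeg_eq fun m => ?_
  suffices ∃ n ≥ m, n ≥ k ∧ initSeg x n = initSeg y n from this.imp fun n hn => ⟨hn.1, hn.2.2⟩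
  induction m with
  | zero => exact ⟨k, zero_le, le_rfl, hk⟩
  | succ m ih =>
    obtain ⟨n, hmn, hkn, hn⟩ := ih
    obtain ⟨n', hnn', hn'⟩ := h n hkn hn
    exact ⟨n', by omega, by omega, hn'⟩

end InitSeg

/-! ### A normal form for Laver trees -/

theorem IsTree.mem_of_prefix {T : Set (List ℕ)} (hT : IsTree T) {t u : List ℕ} (ht : t ∈ T)
    (hut : u <+: t) : u ∈ T :=
  List.prefix_iff_eq_take.1 hut ▸ hT.2 t ht _

/-- The tree with stem `s` in which each node `t` extending `s` has `S t` as its set of immediate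
successors. Every Laver tree is of this form, see `IsLaverTree.exists_eq_laverTree`; the values of
`S` at the other sequences are irrelevant. -/
def laverTree (s : List ℕ) (S : List ℕ → Set ℕ) : Set (List ℕ) :=
  {t | (s <+: t ∨ t <+: s) ∧ ∀ u k, s <+: u → u ++ [k] <+: t → k ∈ S u}

section LaverTree

variable {s t u : List ℕ} {S W : List ℕ → Set ℕ} {x : ℕ → ℕ}

theorem laverTree_mono (h : ∀ t, S t ⊆ W t) : laverTree s S ⊆ laverTree s W :=
  fun _ ht => ⟨ht.1, fun u k hu hk => h u (ht.2 u k hu hk)⟩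

theorem mem_laverTree_of_prefix_stem (h : t <+: s) : t ∈ laverTree s S := by
  refine ⟨.inr h, fun u k hu hk => ?_⟩
  have := (hk.trans (h.trans hu)).length_le
  simp at this

theorem mem_laverTree_of_prefix (ht : t ∈ laverTree s S) (hut : u <+: t) : u ∈ laverTree s S :=
  ⟨ht.1.elim (fun hst => List.prefix_or_prefix_of_prefix hst hut) fun hts => .inr (hut.trans hts),
    fun v k hv hk => ht.2 v k hv (hk.trans hut)⟩

theorem append_singleton_mem_laverTree (ht : t ∈ laverTree s S) (hst : s <+: t) {k : ℕ}
    (hk : k ∈ S t) : t ++ [k] ∈ laverTree s S := by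
  refine ⟨.inl (hst.trans (List.prefix_append _ _)), fun u j hu huj => ?_⟩
  rcases List.prefix_concat_iff.1 huj with heq | hpre
  · obtain ⟨rfl, hjk⟩ := List.append_inj' heq rfl
    exact List.singleton_inj.1 hjk ▸ hk
  · exact ht.2 u j hu hpre

theorem isTree_laverTree (s : List ℕ) (S : List ℕ → Set ℕ) : IsTree (laverTree s S) :=
  ⟨⟨s, mem_laverTree_of_prefix_stem (List.prefix_refl s)⟩,
    fun _ ht _ => mem_laverTree_of_prefix ht (List.take_prefix _ _)⟩

theorem isLaverTree_laverTree (s : List ℕ) (hS : ∀ t, (S t).Infinite) :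
    IsLaverTree (laverTree s S) :=
  ⟨isTree_laverTree s S, s, mem_laverTree_of_prefix_stem (List.prefix_refl s),
    fun _ ht => ht.1, fun t ht hst =>
      (hS t).mono fun _ hk => append_singleton_mem_laverTree ht hst hk⟩

theorem IsLaverTree.exists_eq_laverTree {T : Set (List ℕ)} (hT : IsLaverTree T) :
    ∃ s W, (∀ t, (W t).Infinite) ∧ T = laverTree s W := by
  obtain ⟨hTree, s, hs, hstem, hinf⟩ := hT
  refine ⟨s, fun t => {k | t ∈ T → s <+: t → k ∈ succs T t}, fun t => ?_, ?_⟩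
  · by_cases h : t ∈ T ∧ s <+: t
    · exact (hinf t h.1 h.2).mono fun k hk _ _ => hk
    · exact infinite_univ.mono fun k _ ht hst => (h ⟨ht, hst⟩).elim
  · refine Subset.antisymm (fun t ht => ⟨hstem t ht, fun u k _ huk _ _ =>
      hTree.mem_of_prefix ht huk⟩) fun t ht => ?_
    induction t using List.reverseRecOn with
    | nil => exact hTree.mem_of_prefix hs List.nil_prefix
    | append_singleton t k ih =>
      have htT : t ∈ T := ih (mem_laverTree_of_prefix ht (List.prefix_append _ _))
      rcases ht.1 with hst | hts
      · rcases List.prefix_concat_iff.1 hst with rfl | hst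
        · exact hs
        · exact ht.2 t k hst (List.prefix_refl _) htT hst
      · exact hTree.mem_of_prefix hs hts

theorem stem_prefix_initSeg (hx : x ∈ treeBody (laverTree s S)) {n : ℕ} (hn : s.length ≤ n) :
    s <+: initSeg x n :=
  (hx n).1.elim id fun h => (h.eq_of_length_le (by simpa using hn)) ▸ List.prefix_refl _

theorem initSeg_length_stem (hx : x ∈ treeBody (laverTree s S)) : initSeg x s.length = s :=
  ((stem_prefix_initSeg hx le_rfl).eq_of_length (by simp)).symm

theorem mem_of_mem_treeBody_laverTree (hx : x ∈ treeBody (laverTree s S)) {n : ℕ}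
    (hn : s.length ≤ n) : x n ∈ S (initSeg x n) :=
  (hx (n + 1)).2 _ _ (stem_prefix_initSeg hx hn) (initSeg_succ x n ▸ List.prefix_refl _)

end LaverTree

theorem treeBody_mono {Q T : Set (List ℕ)} (h : Q ⊆ T) : treeBody Q ⊆ treeBody T :=
  fun _ hx n => h (hx n)

/-! ### Colour sequences of branches -/

/-- The sequence of colours under `c` of the initial segments of `x` of length at least `N`.
The offset `N` allows one to start beyond the stem of a Laver tree. -/
def branchColors {K : Type*} (c : List ℕ → K) (N : ℕ) (x : ℕ → ℕ) : ℕ → K :=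
  fun n => c (initSeg x (n + N))

theorem exists_bool_coloring_infinite_fibers {s : Set ℕ} (hs : s.Infinite) :
    ∃ e : ℕ → Bool, ∀ b, {k ∈ s | e k = b}.Infinite := by
  classical
  obtain ⟨u, v, rfl, hdisj, hcard⟩ := hs.exists_union_disjoint_cardinal_eq_of_infinite
  have hiff : u.Infinite ↔ v.Infinite := by
    rw [← infinite_coe_iff, ← infinite_coe_iff, Cardinal.infinite_iff, Cardinal.infinite_iff, hcard]
  have hu : u.Infinite := (infinite_union.1 hs).elim id hiff.2
  refine ⟨fun k => decide (k ∈ u), Bool.forall_bool.2 ⟨?_, ?_⟩⟩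
  · exact (hiff.1 hu).mono fun k hk => ⟨.inr hk, decide_eq_false (hdisj.notMem_of_mem_right hk)⟩
  · exact hu.mono fun k hk => ⟨.inl hk, decide_eq_true hk⟩

theorem IsLaverTree.exists_coloring_forall_exists_subtree {P : Set (List ℕ)}
    (hP : IsLaverTree P) :
    ∃ (c : List ℕ → Bool) (N : ℕ), ∀ ξ : ℕ → Bool, ∃ R, IsLaverTree R ∧ R ⊆ P ∧
      ∀ x ∈ treeBody R, branchColors c N x = ξ := by
  obtain ⟨s, W, hW, rfl⟩ := hP.exists_eq_laverTree
  choose e he using fun t => exists_bool_coloring_infinite_fibers (hW t)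
  refine ⟨fun t => e t.dropLast (t.getLastD 0), s.length + 1, fun ξ => ?_⟩
  refine ⟨laverTree s fun t => {k ∈ W t | e t k = ξ (t.length - s.length)},
    isLaverTree_laverTree s fun t => he t _, laverTree_mono fun t => sep_subset _ _,
    fun x hx => funext fun n => ?_⟩
  have hcolor := (mem_of_mem_treeBody_laverTree hx (Nat.le_add_left s.length n)).2
  simpa [branchColors, ← add_assoc, initSeg_succ] using hcolor

/-! ### Thinning out successors to separate branches by their limits -/

section MetricSequences

variable {Z : Type*} [MetricSpace Z] {z : ℕ → Z} {ξ : Z} {ε : ℕ → ℝ}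

theorem exists_lacunary_seq {α : Type*} {P : ℕ → α → Prop} {d : ℕ → α → ℝ}
    (h : ∀ n, ∀ δ > 0, ∃ a, P n a ∧ d n a < δ) :
    ∃ (a : ℕ → α) (ε : ℕ → ℝ), (∀ n, 0 < ε n) ∧ (∀ n, ε (n + 1) ≤ ε n / 4) ∧
      ∀ n, P n (a n) ∧ d n (a n) < ε n ∧ (0 < d n (a n) → ε (n + 1) ≤ d n (a n) / 4) := by
  have : Nonempty α := ⟨(h 0 1 one_pos).choose⟩
  choose! a ha using h
  let next (n : ℕ) (δ : ℝ) : ℝ := if 0 < d n (a n δ) then d n (a n δ) / 4 else δ / 4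
  let ε (n : ℕ) : ℝ := Nat.rec 1 next n
  have hε_pos (n : ℕ) : 0 < ε n := by
    induction n with
    | zero => exact one_pos
    | succ n ih =>
      change 0 < next n (ε n)
      dsimp only [next]
      split_ifs <;> positivity
  refine ⟨fun n => a n (ε n), ε, hε_pos, fun n => ?_, fun n =>
    ⟨(ha n _ (hε_pos n)).1, (ha n _ (hε_pos n)).2, fun hd => (if_pos hd).le⟩⟩
  have hlt := (ha n _ (hε_pos n)).2
  change next n (ε n) ≤ ε n / 4
  dsimp only [next]
  split_ifs <;> linarith

theorem dist_limit_le_of_step_lt (hε : ∀ n, ε (n + 1) ≤ ε n / 4)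
    (hstep : ∀ n, dist (z n) (z (n + 1)) < ε n) (hz : Tendsto z atTop (𝓝 ξ)) (m : ℕ) :
    dist (z m) ξ ≤ 4 / 3 * ε m := by
  have hgeom (i : ℕ) : ε (m + i) ≤ ε m * (1 / 4) ^ i := by
    induction i with
    | zero => simp
    | succ i ih =>
      rw [← add_assoc, pow_succ]
      linarith [hε (m + i)]
  have := dist_le_of_le_geometric_of_tendsto₀ (f := fun i => z (m + i)) (1 / 4) (ε m) (by norm_num)
    (fun i => (hstep (m + i)).le.trans (hgeom i))
    (by simpa only [add_comm m] using (tendsto_add_atTop_iff_nat m).2 hz)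
  exact this.trans_eq (by ring)

theorem exists_ge_eq_and_ne_succ_of_tendsto (hz : Tendsto z atTop (𝓝 ξ)) {i : ℕ} (hi : z i ≠ ξ) :
    ∃ j ≥ i, z j = z i ∧ z j ≠ z (j + 1) := by
  by_contra! hcon
  have hconst : ∀ j ≥ i, z j = z i := fun j hj => by
    induction j, hj using Nat.le_induction with
    | base => rfl
    | succ j hj ih => rw [← hcon j hj ih, ih]
  exact hi (tendsto_nhds_unique (tendsto_atTop_of_eventually_const hconst) hz)

-- Moves with index `n` are shorter than `ε n`, and `ε (n + 1)` is much smaller than the `n`-th move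
-- unless that move is trivial. Hence `dist (z i) ξ` reveals the index of the first nontrivial move.
theorem exists_ge_dist_limit_mem_Ico {ν : ℕ → ℕ} (hν : StrictMono ν) (hε_pos : ∀ n, 0 < ε n)
    (hε : ∀ n, ε (n + 1) ≤ ε n / 4) (hstep : ∀ i, dist (z i) (z (i + 1)) < ε (ν i))
    (hjump : ∀ i, 0 < dist (z i) (z (i + 1)) → ε (ν i + 1) ≤ dist (z i) (z (i + 1)) / 4)
    (hz : Tendsto z atTop (𝓝 ξ)) {i : ℕ} (hi : z i ≠ ξ) :
    ∃ j ≥ i, dist (z i) ξ ∈ Ico (2 * ε (ν j + 1)) (2 * ε (ν j)) := by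
  have hanti : Antitone ε := antitone_nat_of_succ_le fun n => by linarith [hε n, hε_pos n]
  have hε_succ (j : ℕ) : ε (ν (j + 1)) ≤ ε (ν j + 1) := hanti (hν j.lt_succ_self)
  have htail := dist_limit_le_of_step_lt (ε := fun j => ε (ν j))
    (fun j => (hε_succ j).trans (hε (ν j))) hstep hz
  obtain ⟨j, hij, hji, hne⟩ := exists_ge_eq_and_ne_succ_of_tendsto hz hi
  refine ⟨j, hij, ?_⟩
  rw [← hji]
  constructor
  · linarith [hjump j (dist_pos.2 hne), dist_triangle_right (z j) (z (j + 1)) ξ, htail (j + 1),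
      hε_succ j, hε_pos (ν j + 1)]
  · linarith [htail j, hε_pos (ν j)]

end MetricSequences

theorem le_encode_of_mem {k : ℕ} {t : List ℕ} (h : k ∈ t) : k ≤ Encodable.encode t := by
  induction t with
  | nil => simp at h
  | cons a t ih =>
    rw [Encodable.encode_list_cons]
    rcases List.mem_cons.1 h with rfl | h
    · exact (Nat.left_le_pair _ _).trans (Nat.le_succ _)
    · exact (ih h).trans ((Nat.right_le_pair _ _).trans (Nat.le_succ _))

theorem exists_enumeration_infinite_fibers_entries_le :
    ∃ τ : ℕ → List ℕ, (∀ t, {n | τ n = t}.Infinite) ∧ ∀ n, ∀ k ∈ τ n, k ≤ n := by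
  refine ⟨fun n => Denumerable.ofNat (List ℕ) n.unpair.1, fun t => ?_, fun n k hk => ?_⟩
  · refine infinite_of_injective_forall_mem (f := fun j => Nat.pair (Encodable.encode t) j)
      (fun i j hij => (Nat.pair_eq_pair.1 hij).2) fun j => ?_
    simp
  · exact (le_encode_of_mem hk).trans (by simpa using Nat.unpair_left_le n)

section Fusion

variable {τ : ℕ → List ℕ} {κ : ℕ → ℕ} {s : List ℕ} {x : ℕ → ℕ}

theorem infinite_image_fiber (hτ : ∀ t, {n | τ n = t}.Infinite) (hκ : ∀ n, n < κ n)
    (t : List ℕ) : (κ '' {n | τ n = t}).Infinite :=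
  infinite_of_forall_exists_gt fun m =>
    let ⟨n, hn, hmn⟩ := (hτ t).exists_gt m
    ⟨κ n, mem_image_of_mem κ hn, hmn.trans (hκ n)⟩

theorem exists_strictMono_index_of_mem_treeBody (hτ : ∀ n, ∀ k ∈ τ n, k ≤ n)
    (hκ : ∀ n, n < κ n) (hx : x ∈ treeBody (laverTree s fun t => κ '' {n | τ n = t})) :
    ∃ ν : ℕ → ℕ, StrictMono ν ∧
      ∀ i, τ (ν i) = initSeg x (s.length + i) ∧ κ (ν i) = x (s.length + i) := by
  choose ν hν using fun i => mem_of_mem_treeBody_laverTree hx (Nat.le_add_right s.length i)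
  refine ⟨ν, strictMono_nat_of_lt_succ fun i => ?_, hν⟩
  have hmem : κ (ν i) ∈ τ (ν (i + 1)) := by
    rw [(hν i).2, (hν (i + 1)).1, ← add_assoc, initSeg_succ]
    simp
  exact (hκ _).trans_le (hτ _ _ hmem)

variable {Z : Type*} [MetricSpace Z] {g : List ℕ → Z} {ξ : Z} {ε : ℕ → ℝ}

theorem exists_index_dist_mem_Ico (hτ : ∀ n, ∀ k ∈ τ n, k ≤ n) (hκ : ∀ n, n < κ n)
    (hε_pos : ∀ n, 0 < ε n) (hε : ∀ n, ε (n + 1) ≤ ε n / 4)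
    (hjump : ∀ n, dist (g (τ n)) (g (τ n ++ [κ n])) < ε n ∧
      (0 < dist (g (τ n)) (g (τ n ++ [κ n])) →
        ε (n + 1) ≤ dist (g (τ n)) (g (τ n ++ [κ n])) / 4))
    (hx : x ∈ treeBody (laverTree s fun t => κ '' {n | τ n = t}))
    (hlim : Tendsto (fun m => g (initSeg x m)) atTop (𝓝 ξ)) (hξ : ξ ∉ range g)
    {m : ℕ} (hm : s.length ≤ m) :
    ∃ n, ∃ m' ≥ m, initSeg x (m' + 1) = τ n ++ [κ n] ∧
      dist (g (initSeg x m)) ξ ∈ Ico (2 * ε (n + 1)) (2 * ε n) := by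
  obtain ⟨i, rfl⟩ := Nat.exists_eq_add_of_le hm
  obtain ⟨ν, hν_mono, hν⟩ := exists_strictMono_index_of_mem_treeBody hτ hκ hx
  have hsucc (i : ℕ) : initSeg x (s.length + i + 1) = τ (ν i) ++ [κ (ν i)] := by
    rw [initSeg_succ, (hν i).1, (hν i).2]
  have hjump' (i : ℕ) := hjump (ν i)
  simp only [← hsucc] at hjump'
  simp only [(hν _).1] at hjump'
  obtain ⟨j, hij, hj⟩ := exists_ge_dist_limit_mem_Ico (z := fun i => g (initSeg x (s.length + i)))
    hν_mono hε_pos hε (fun i => (hjump' i).1) (fun i => (hjump' i).2)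
    (by simpa only [add_comm s.length] using (tendsto_add_atTop_iff_nat s.length).2 hlim)
    (ne_of_mem_of_not_mem (mem_range_self _) hξ)
  exact ⟨ν j, s.length + j, by omega, hsucc j, hj⟩

end Fusion

theorem exists_successors_separating_limits {Z : Type*} [TopologicalSpace Z]
    [TopologicalSpace.MetrizableSpace Z] {g : List ℕ → Z} {F : List ℕ → Filter ℕ}
    [∀ t, (F t).NeBot] {W : List ℕ → Set ℕ} (hF : ∀ t, F t ≤ cofinite) (hW : ∀ t, W t ∈ F t)
    (hg : ∀ t, Tendsto (fun k => g (t ++ [k])) (F t) (𝓝 (g t))) :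
    ∃ S : List ℕ → Set ℕ, (∀ t, S t ⊆ W t) ∧ (∀ t, (S t).Infinite) ∧
      ∀ s, ∀ x ∈ treeBody (laverTree s S), ∀ y ∈ treeBody (laverTree s S), ∀ ξ ∉ range g,
        Tendsto (fun m => g (initSeg x m)) atTop (𝓝 ξ) →
        Tendsto (fun m => g (initSeg y m)) atTop (𝓝 ξ) → x = y := by
  let := TopologicalSpace.metrizableSpaceMetric Z
  obtain ⟨τ, hτ_inf, hτ_le⟩ := exists_enumeration_infinite_fibers_entries_le
  have hsmall (n : ℕ) (δ : ℝ) (hδ : δ > 0) :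
      ∃ k, (k ∈ W (τ n) ∧ n < k) ∧ dist (g (τ n)) (g (τ n ++ [k])) < δ := by
    have hgt : ∀ᶠ k in F (τ n), n < k := hF _ (Nat.cofinite_eq_atTop ▸ eventually_gt_atTop n)
    have hdist := (tendsto_const_nhds.dist (hg (τ n))).eventually_lt_const
      (by rwa [dist_self] : dist (g (τ n)) (g (τ n)) < δ)
    have hmem : ∀ᶠ k in F (τ n), k ∈ W (τ n) := hW _
    exact ((hmem.and hgt).and hdist).exists
  obtain ⟨κ, ε, hε_pos, hε, hκ⟩ := exists_lacunary_seq hsmall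
  have hanti : Antitone ε := antitone_nat_of_succ_le fun n => by linarith [hε n, hε_pos n]
  have hκ_gt (n : ℕ) : n < κ n := (hκ n).1.2
  refine ⟨fun t => κ '' {n | τ n = t}, fun t => ?_, infinite_image_fiber hτ_inf hκ_gt,
    fun s x hx y hy ξ hξ hlimx hlimy => ?_⟩
  · rintro _ ⟨n, rfl, rfl⟩
    exact (hκ n).1.1
  refine eq_of_forall_exists_gt_initSeg_eq
    ((initSeg_length_stem hx).trans (initSeg_length_stem hy).symm) fun m hm hxy => ?_
  obtain ⟨n, p, hp, hxn, hdx⟩ :=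
    exists_index_dist_mem_Ico hτ_le hκ_gt hε_pos hε (fun n => (hκ n).2) hx hlimx hξ hm
  obtain ⟨n', p', -, hyn, hdy⟩ :=
    exists_index_dist_mem_Ico hτ_le hκ_gt hε_pos hε (fun n => (hκ n).2) hy hlimy hξ hm
  rw [← hxy] at hdy
  obtain rfl : n = n' := by
    by_contra hne
    rcases Ne.lt_or_gt hne with h | h <;>
      linarith [hanti (Nat.succ_le_of_lt h), hdx.1, hdx.2, hdy.1, hdy.2]
  have hseg : initSeg x (p + 1) = initSeg y (p' + 1) := hxn.trans hyn.symm
  have hp' : p + 1 = p' + 1 := by simpa using congrArg List.length hseg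
  exact ⟨p + 1, by omega, hp' ▸ hseg⟩

/-! ### Limits of colourings along ultrafilters -/

section UltrafilterLimits

variable {K : Type*} [TopologicalSpace K]

/-- The colouring which gives each node `t` the limit of the colours of its immediate successors
along the ultrafilter `U t`. -/
noncomputable def succLim (U : List ℕ → Ultrafilter ℕ) (c : List ℕ → K) (t : List ℕ) : K :=
  ((U t).map fun k => c (t ++ [k])).lim

/-- The colour sequence expected at the node `t`: entries decided by `t` agree with `branchColors`,
the others are iterated limits of colours along `U`. -/
noncomputable def limitColors (U : List ℕ → Ultrafilter ℕ) (c : List ℕ → K) (N : ℕ)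
    (t : List ℕ) : ℕ → K :=
  fun n => (succLim U)^[n + N - t.length] c (t.take (n + N))

theorem tendsto_succLim [CompactSpace K] (U : List ℕ → Ultrafilter ℕ) (c : List ℕ → K)
    (t : List ℕ) : Tendsto (fun k => c (t ++ [k])) (U t) (𝓝 (succLim U c t)) :=
  ((U t).map fun k => c (t ++ [k])).le_nhds_lim

theorem tendsto_limitColors [CompactSpace K] (U : List ℕ → Ultrafilter ℕ) (c : List ℕ → K) (N : ℕ)
    (t : List ℕ) :
    Tendsto (fun k => limitColors U c N (t ++ [k])) (U t) (𝓝 (limitColors U c N t)) := by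
  refine tendsto_pi_nhds.2 fun n => ?_
  rcases le_or_gt (n + N) t.length with h | h
  · have hconst (k : ℕ) : limitColors U c N (t ++ [k]) n = limitColors U c N t n := by
      simp only [limitColors, List.take_append_of_le_length h, List.length_append,
        Nat.sub_eq_zero_of_le h, Nat.sub_eq_zero_of_le (h.trans (Nat.le_add_right _ _))]
    simpa only [hconst] using tendsto_const_nhds
  · obtain ⟨j, hj⟩ := Nat.exists_eq_add_of_lt h
    have hsucc (k : ℕ) : limitColors U c N (t ++ [k]) n = (succLim U)^[j] c (t ++ [k]) := by
      rw [limitColors, List.take_of_length_le (by simp; omega),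
        show n + N - (t ++ [k]).length = j by simp; omega]
    have hlim : limitColors U c N t n = succLim U ((succLim U)^[j] c) t := by
      rw [limitColors, List.take_of_length_le h.le, show n + N - t.length = j + 1 by omega,
        Function.iterate_succ_apply']
    simpa only [hsucc, hlim] using tendsto_succLim U _ t

theorem tendsto_limitColors_initSeg (U : List ℕ → Ultrafilter ℕ) (c : List ℕ → K) (N : ℕ)
    (x : ℕ → ℕ) :
    Tendsto (fun m => limitColors U c N (initSeg x m)) atTop (𝓝 (branchColors c N x)) := by
  refine tendsto_pi_nhds.2 fun n => tendsto_atTop_of_eventually_const (i₀ := n + N) fun m hm => ?_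
  rw [limitColors, length_initSeg, Nat.sub_eq_zero_of_le hm, take_initSeg x hm]
  rfl

end UltrafilterLimits

theorem IsLaverTree.exists_subtree_injOn_branchColors {K : Type*} [TopologicalSpace K]
    [CompactSpace K] [TopologicalSpace.MetrizableSpace K] {T : Set (List ℕ)} (hT : IsLaverTree T)
    (c : List ℕ → K) (N : ℕ) :
    ∃ Q, IsLaverTree Q ∧ Q ⊆ T ∧ ∃ E : Set (ℕ → K), E.Countable ∧
      InjOn (branchColors c N) (treeBody Q \ branchColors c N ⁻¹' E) := by
  obtain ⟨s, W, hW, rfl⟩ := hT.exists_eq_laverTree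
  have (t : List ℕ) : (cofinite ⊓ 𝓟 (W t)).NeBot := (hW t).cofinite_inf_principal_neBot
  let U (t : List ℕ) : Ultrafilter ℕ := Ultrafilter.of (cofinite ⊓ 𝓟 (W t))
  have hU (t : List ℕ) : (U t : Filter ℕ) ≤ cofinite ⊓ 𝓟 (W t) := Ultrafilter.of_le _
  obtain ⟨S, hSW, hS, hsep⟩ := exists_successors_separating_limits
    (fun t => (hU t).trans inf_le_left) (fun t => le_principal_iff.1 ((hU t).trans inf_le_right))
    (tendsto_limitColors U c N)
  refine ⟨laverTree s S, isLaverTree_laverTree s hS, laverTree_mono hSW,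
    range (limitColors U c N), countable_range _, fun x hx y hy hxy => ?_⟩
  exact hsep s x hx.1 y hy.1 _ hx.2 (tendsto_limitColors_initSeg U c N x)
    (hxy ▸ tendsto_limitColors_initSeg U c N y)

/-! ### Luzin-type sets -/

section Cardinals

universe u

variable {α β ι : Type u} {κ : Cardinal.{u}}

theorem mk_biUnion_lt_of_countable (hκ : ℵ₀ < κ) {I : Set ι} (hI : #I < κ) {A : ι → Set α}
    (hA : ∀ i ∈ I, (A i).Countable) : #(⋃ i ∈ I, A i) < κ :=
  calc #(⋃ i ∈ I, A i) ≤ #I * ⨆ i : I, #(A i) := mk_biUnion_le A I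
    _ ≤ #I * ℵ₀ := by gcongr; exact ciSup_le' fun i => (hA i i.2).le_aleph0
    _ < κ := mul_lt_of_lt hκ.le hI hκ

theorem exists_mk_preimage_singleton_inter_biUnion_lt (hκ : ℵ₀ < κ) (hβ : κ ≤ #β) {f : α → β}
    {C : ι → Set α} {E : ι → Set β} (hE : ∀ i, (E i).Countable)
    (hf : ∀ i, InjOn f (C i \ f ⁻¹' E i)) {I : Set ι} (hI : #I < κ) :
    ∃ b, #↑(f ⁻¹' {b} ∩ ⋃ i ∈ I, C i) < κ := by
  have hne : ⋃ i ∈ I, E i ≠ Set.univ := fun h =>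
    ((mk_biUnion_lt_of_countable hκ hI fun i _ => hE i).trans_le hβ).ne (by rw [h, mk_univ])
  obtain ⟨b, hb⟩ := (ne_univ_iff_exists_notMem _).1 hne
  refine ⟨b, ?_⟩
  rw [inter_iUnion₂]
  refine mk_biUnion_lt_of_countable hκ hI fun i hi => Subsingleton.countable ?_
  have hbi : b ∉ E i := fun h => hb (mem_biUnion hi h)
  rintro x ⟨rfl, hx⟩ y ⟨hxy, hy⟩
  exact hf i ⟨hx, hbi⟩ ⟨hy, fun h => hbi (hxy ▸ h)⟩ hxy.symm

theorem exists_injective_forall_mem_of_mk_Iio_lt [LinearOrder ι] [WellFoundedLT ι]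
    {G : ι → Set α} (hG : ∀ i, #(Iio i) < #(G i)) :
    ∃ a : ι → α, Function.Injective a ∧ ∀ i, a i ∈ G i := by
  have hnext (i : ι) (f : Iio i → α) : (G i \ range f).Nonempty :=
    sdiff_nonempty_of_mk_lt_mk (mk_range_le.trans_lt (hG i))
  choose next hmem hnotMem using hnext
  let a : ι → α := wellFounded_lt.fix fun i rec => next i fun j => rec j j.2
  have ha (i : ι) : a i = next i fun j => a j := wellFounded_lt.fix_eq _ i
  have hne {i j : ι} (hij : i < j) : a i ≠ a j := fun h =>
    hnotMem j (fun k => a k) ⟨⟨i, hij⟩, h.trans (ha j)⟩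
  exact ⟨a, .of_lt_imp_ne fun _ _ => hne, fun i => ha i ▸ hmem i _⟩

theorem exists_subset_mk_eq_forall_mk_inter_lt (hκ : ℵ₀ ≤ κ) (hι : #ι ≤ κ) {X : Set α}
    {C : ι → Set α} (hX : ∀ I : Set ι, #I < κ → κ ≤ #↑(X \ ⋃ i ∈ I, C i)) :
    ∃ A ⊆ X, #A = κ ∧ ∀ i, #↑(C i ∩ A) < κ := by
  rw [← mk_ord_toType κ] at hι
  obtain ⟨rank⟩ := hι
  have hIio (o : κ.ord.ToType) : #(Iio o) < κ := by
    simpa using mk_Iio_lt o (by simp)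
  have hrank (o : κ.ord.ToType) : #{i | rank i < o} < κ :=
    (mk_preimage_of_injective rank (Iio o) rank.injective).trans_lt (hIio o)
  obtain ⟨a, ha_inj, ha⟩ := exists_injective_forall_mem_of_mk_Iio_lt
    (G := fun o => X \ ⋃ i ∈ {i | rank i < o}, C i)
    fun o => (hIio o).trans_le (hX _ (hrank o))
  refine ⟨range a, range_subset_iff.2 fun o => (ha o).1, ?_, fun i => ?_⟩
  · rw [mk_range_eq a ha_inj, mk_ord_toType]
  have hsub : C i ∩ range a ⊆ a '' Iic (rank i) := by
    rintro _ ⟨hi, o, rfl⟩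
    have ho : ¬rank i < o := fun ho => (ha o).2 (mem_biUnion (s := {i | rank i < o}) ho hi)
    exact ⟨o, not_lt.1 ho, rfl⟩
  have hIic : #(Iic (rank i)) < κ := by
    rw [← Iio_insert]
    exact mk_insert_le.trans_lt (add_lt_of_lt hκ (hIio _) (one_lt_aleph0.trans_le hκ))
  exact (mk_le_mk_of_subset hsub).trans_lt (mk_image_le.trans_lt hIic)

end Cardinals

/-! ### The Laver ideal -/

theorem mem_treeIdeal_of_forall_exists_inter_mem {𝕋 : Set (Set (List ℕ))} {A : Set (ℕ → ℕ)}
    (h : ∀ P ∈ 𝕋, ∃ Q ∈ 𝕋, Q ⊆ P ∧ treeBody Q ∩ A ∈ treeIdeal 𝕋) : A ∈ treeIdeal 𝕋 := by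
  intro P hP
  obtain ⟨Q, hQ, hQP, hQA⟩ := h P hP
  obtain ⟨R, hR, hRQ, hRA⟩ := hQA Q hQ
  rw [← inter_assoc, inter_eq_left.2 (treeBody_mono hRQ)] at hRA
  exact ⟨R, hR, hRQ.trans hQP, hRA⟩

theorem mem_treeIdeal_isLaverTree_of_mk_lt {Y : Set (ℕ → ℕ)} (hY : #Y < 𝔠) :
    Y ∈ treeIdeal {T | IsLaverTree T} := by
  intro P hP
  obtain ⟨c, N, hR⟩ := IsLaverTree.exists_coloring_forall_exists_subtree hP
  have hne : branchColors c N '' Y ≠ Set.univ := fun h =>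
    (mk_image_le.trans_lt hY).ne (by rw [h, mk_univ]; simp)
  obtain ⟨ξ, hξ⟩ := (ne_univ_iff_exists_notMem _).1 hne
  obtain ⟨R, hRL, hRP, hRξ⟩ := hR ξ
  exact ⟨R, hRL, hRP, eq_empty_of_forall_notMem fun x hx => hξ ⟨x, hx.2, hRξ x hx.1⟩⟩

theorem exists_laver_subtrees_forall_continuum_le_mk_diff {X : Set (ℕ → ℕ)}
    (hX : X ∉ treeIdeal {T | IsLaverTree T}) :
    ∃ Q : {T // IsLaverTree T} → Set (List ℕ), (∀ T, IsLaverTree (Q T) ∧ Q T ⊆ T) ∧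
      ∀ I : Set {T // IsLaverTree T}, #I < 𝔠 → 𝔠 ≤ #↑(X \ ⋃ T ∈ I, treeBody (Q T)) := by
  obtain ⟨P, hP, hPX⟩ : ∃ P, IsLaverTree P ∧
      ∀ R, IsLaverTree R → R ⊆ P → treeBody R ∩ X ∉ treeIdeal {T | IsLaverTree T} := by
    by_contra! hcon
    exact hX (mem_treeIdeal_of_forall_exists_inter_mem hcon)
  obtain ⟨c, N, hR⟩ := hP.exists_coloring_forall_exists_subtree
  choose Q hQ hQT E hE hinj using fun T : {T // IsLaverTree T} =>
    T.2.exists_subtree_injOn_branchColors c N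
  refine ⟨Q, fun T => ⟨hQ T, hQT T⟩, fun I hI => ?_⟩
  obtain ⟨ξ, hξ⟩ := exists_mk_preimage_singleton_inter_biUnion_lt aleph0_lt_continuum
    (by simp) hE hinj hI
  obtain ⟨R, hRL, hRP, hRξ⟩ := hR ξ
  by_contra! hlt
  refine hPX R hRL hRP (mem_treeIdeal_isLaverTree_of_mk_lt ?_)
  have hcover : treeBody R ∩ X ⊆ (X \ ⋃ T ∈ I, treeBody (Q T)) ∪
      (branchColors c N ⁻¹' {ξ} ∩ ⋃ T ∈ I, treeBody (Q T)) := fun x hx =>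
    (em (x ∈ ⋃ T ∈ I, treeBody (Q T))).elim (fun h => .inr ⟨hRξ x hx.1, h⟩)
      fun h => .inl ⟨hx.2, h⟩
  exact ((mk_le_mk_of_subset hcover).trans (mk_union_le _ _)).trans_lt
    (add_lt_of_lt aleph0_le_continuum hlt hξ)

theorem stmt13_general (X : Set (ℕ → ℕ)) :
    ∃ A ⊆ X, A ∈ treeIdeal {T | IsLaverTree T} ∧ #A = #X := by
  by_cases hX : X ∈ treeIdeal {T | IsLaverTree T}
  · exact ⟨X, Subset.rfl, hX, rfl⟩
  obtain ⟨Q, hQ, hdiff⟩ := exists_laver_subtrees_forall_continuum_le_mk_diff hX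
  have hmkX : #X = 𝔠 :=
    ((mk_set_le X).trans_eq (by simp)).antisymm
      (not_lt.1 fun h => hX (mem_treeIdeal_isLaverTree_of_mk_lt h))
  have hmkLaver : #{T // IsLaverTree T} ≤ 𝔠 := (mk_subtype_le _).trans_eq (by simp)
  obtain ⟨A, hAX, hmkA, hQA⟩ :=
    exists_subset_mk_eq_forall_mk_inter_lt aleph0_le_continuum hmkLaver hdiff
  refine ⟨A, hAX, mem_treeIdeal_of_forall_exists_inter_mem fun T hT => ?_, hmkA.trans hmkX.symm⟩
  exact ⟨Q ⟨T, hT⟩, (hQ _).1, (hQ _).2, mem_treeIdeal_isLaverTree_of_mk_lt (hQA _)⟩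

/-- every X ⊆ ω^ω of size 𝔠 has a subset of size 𝔠 belonging to l₀. -/
theorem stmt13 (X : Set (ℕ → ℕ)) (hX : Cardinal.mk ↑X = Cardinal.continuum) :
    ∃ A ⊆ X, A ∈ treeIdeal {T | IsLaverTree T} ∧ Cardinal.mk ↑A = Cardinal.continuum := by
  simpa only [hX] using stmt13_general X
end

section
/- Assume the continuum 𝔠 = 2^ℵ₀ is a regular cardinal. Then for every generalized Luzin set L ⊆ ℝ and every generalized Sierpiński set S ⊆ ℝ, the algebraic sum L + S = {l + s : l ∈ L, s ∈ S} is s₀-small in ℝ: for every nonempty perfect set P ⊆ ℝ there exists a nonempty perfect set Q ⊆ P with Q ∩ (L + S) = ∅. -/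
open Cardinal Set

/-- Generalized Luzin set: meets every meager set in size < |L|. -/
def IsGenLuzin (L : Set ℝ) : Prop :=
  ∀ M : Set ℝ, IsMeagre M → Cardinal.mk ↑(L ∩ M) < Cardinal.mk ↑L

/-- Generalized Sierpiński set: meets every Lebesgue null set in size < |S|. -/
def IsGenSierpinski (S : Set ℝ) : Prop :=
  ∀ N : Set ℝ, MeasureTheory.volume N = 0 → Cardinal.mk ↑(S ∩ N) < Cardinal.mk ↑S

/-!
A compact null set `Q` is swallowed by open sets `O n ⊇ Q` of summable measure, and `O n` still
contains a small neighbourhood of the identity added to `Q`. Spreading these neighbourhoods over a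
dense sequence gives a comeagre set `G` and, by Borel–Cantelli, a null set `N` such that `l ∈ G` and
`l + s ∈ Q` force `s ∈ N`. Hence an element `l + s` of `Q ∩ (L + S)` has `l ∈ L \ G` or
`s ∈ S ∩ N`, which leaves fewer than `𝔠` choices for that summand; once it is fixed, the other one
lies in a translate of `Q`, which is both null and meagre, so again there are fewer than `𝔠`
choices. By regularity `Q ∩ (L + S)` has fewer than `𝔠` points when `#L = #S = 𝔠`; the two
cardinalities can reach `𝔠` only together, because some comeagre set is null (Rothberger).

Every nonempty perfect set contains a nonempty compact null perfect `Q`, and `Q` contains `𝔠`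
disjoint nonempty perfect sets, one of which must miss `L + S`.
-/

open Filter Topology MeasureTheory MeasureTheory.Measure

open scoped Pointwise

universe u v

section Concentration

variable {α β : Type u} {f : Filter α} {g : Filter β} {A : Set α} {B : Set β} {R : α → β → Prop}

/-- A set `A` is *Luzin along* a filter if it has fewer than `#A` points in common with every set
whose complement belongs to the filter. Generalized Luzin sets are the case `residual ℝ`,
generalized Sierpiński sets the case `ae volume`. -/
def IsLuzinAlong (f : Filter α) (A : Set α) : Prop :=
  ∀ M : Set α, Mᶜ ∈ f → #↑(A ∩ M) < #A

theorem IsLuzinAlong.mk_le_mk (hA : IsLuzinAlong f A) (hB : IsLuzinAlong g B)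
    (hreg : (#B).IsRegular) (hf : ∀ b, ∀ᶠ a in f, R a b) (hg : ∀ a, ∀ᶠ b in g, ¬ R a b) :
    #B ≤ #A := by
  by_contra! hlt
  have hcover : B ⊆ ⋃ a ∈ A, B ∩ {b | R a b} := by
    intro b hb
    by_contra hnot
    have hsub : A ⊆ {a | ¬ R a b} := fun a ha hab =>
      hnot (mem_iUnion₂.2 ⟨a, ha, hb, hab⟩)
    have hsmall := hA {a | ¬ R a b} ((hf b).mono fun _ => not_not_intro)
    rw [inter_eq_left.2 hsub] at hsmall
    exact hsmall.false
  have hunion : #↑(⋃ a ∈ A, B ∩ {b | R a b}) < #B :=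
    (card_biUnion_lt_iff_forall_of_isRegular hreg hlt).2 fun a _ => hB _ (hg a)
  exact ((mk_le_mk_of_subset hcover).trans_lt hunion).false

theorem IsLuzinAlong.mk_prod_inter_lt (hA : IsLuzinAlong f A) (hB : IsLuzinAlong g B)
    (hreg : (#A).IsRegular) (hAB : #A = #B) (hf : ∀ b, ∀ᶠ a in f, ¬ R a b)
    (hg : ∀ a, ∀ᶠ b in g, ¬ R a b) (hfg : ∀ᶠ p in f ×ˢ g, ¬ R p.1 p.2) :
    #↑(A ×ˢ B ∩ {p | R p.1 p.2}) < #A := by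
  obtain ⟨U, hU, V, hV, hUV⟩ := mem_prod_iff.1 hfg
  have hrows : #↑(⋃ a ∈ A ∩ Uᶜ, Prod.mk a '' (B ∩ {b | R a b})) < #A :=
    (card_biUnion_lt_iff_forall_of_isRegular hreg (hA _ (by rwa [compl_compl]))).2
      fun a _ => mk_image_le.trans_lt (hAB ▸ hB _ (hg a))
  have hcols : #↑(⋃ b ∈ B ∩ Vᶜ, (·, b) '' (A ∩ {a | R a b})) < #A :=
    (card_biUnion_lt_iff_forall_of_isRegular hreg (hAB ▸ hB _ (by rwa [compl_compl]))).2
      fun b _ => mk_image_le.trans_lt (hA _ (hf b))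
  refine (mk_le_mk_of_subset ?_).trans_lt
    ((mk_union_le _ _).trans_lt (add_lt_of_lt hreg.aleph0_le hrows hcols))
  rintro ⟨a, b⟩ ⟨⟨ha, hb⟩, hab⟩
  by_cases haU : a ∈ U
  · have hbV : b ∉ V := fun hbV => hUV (mk_mem_prod haU hbV) hab
    exact Or.inr (mem_iUnion₂.2 ⟨b, ⟨hb, hbV⟩, a, ⟨ha, hab⟩, rfl⟩)
  · exact Or.inl (mem_iUnion₂.2 ⟨a, ⟨ha, haU⟩, b, ⟨hb, hab⟩, rfl⟩)

end Concentration

theorem mk_nat_arrow_bool : #(ℕ → Bool) = 𝔠 := by simp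

theorem isRegular_continuum_congr_univ :
    continuum.{u}.IsRegular ↔ continuum.{v}.IsRegular := by
  rw [← isRegular_lift_iff.{v, u}, ← isRegular_lift_iff.{u, v}, lift_continuum, lift_continuum]

section PerfectSets

instance perfectSpace_pi {ι : Type*} [Infinite ι] {X : ι → Type*} [∀ i, TopologicalSpace (X i)]
    [∀ i, Nontrivial (X i)] : PerfectSpace (∀ i, X i) := by
  classical
  refine perfectSpace_iff_forall_not_isolated.2 fun x => ?_
  choose y hy using fun i => exists_ne (x i)
  have hlim : Tendsto (fun i => Function.update x i (y i)) cofinite (𝓝 x) := by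
    refine tendsto_pi_nhds.2 fun j => tendsto_const_nhds.congr' ?_
    filter_upwards [eventually_cofinite_ne j] with i hij
    rw [Function.update_of_ne hij.symm]
  have hne : ∀ i, Function.update x i (y i) ≠ x := fun i => by simpa using hy i
  exact (tendsto_nhdsWithin_iff.2 ⟨hlim, Eventually.of_forall hne⟩).neBot

theorem perfect_range {X Y : Type*} [TopologicalSpace X] [PerfectSpace X] [CompactSpace X]
    [TopologicalSpace Y] [T2Space Y] {f : X → Y} (hf : Continuous f) (hinj : f.Injective) :
    Perfect (range f) := by
  refine ⟨(isCompact_range hf).isClosed, preperfect_iff_nhds.2 ?_⟩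
  rintro _ ⟨x, rfl⟩ U hU
  obtain ⟨z, hzU, hzx⟩ := preperfect_iff_nhds.1 PerfectSpace.univ_preperfect x (mem_univ x) _
    (hf.continuousAt.preimage_mem_nhds hU)
  exact ⟨f z, ⟨hzU.1, mem_range_self z⟩, hinj.ne hzx⟩

/-- Interleaving of binary sequences, which splits the Cantor space into continuum many disjoint
copies of itself. -/
def cantorProdHomeomorph : (ℕ → Bool) × (ℕ → Bool) ≃ₜ (ℕ → Bool) :=
  Homeomorph.sumArrowHomeomorphProdArrow.symm.trans
    (Homeomorph.piCongrLeft (Y := fun _ => Bool) Equiv.natSumNatEquivNat)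

variable {α : Type*} [TopologicalSpace α] [PolishSpace α] {P : Set α}

theorem exists_pairwise_disjoint_perfect_subsets (hP : Perfect P) (hne : P.Nonempty) :
    ∃ Q : (ℕ → Bool) → Set α,
      (∀ x, Q x ⊆ P ∧ Perfect (Q x) ∧ (Q x).Nonempty ∧ IsCompact (Q x)) ∧
        Pairwise (Function.onFun Disjoint Q) := by
  let := TopologicalSpace.upgradeIsCompletelyMetrizable α
  obtain ⟨f, hfP, hf, hinj⟩ := hP.exists_nat_bool_injection hne
  let F : (ℕ → Bool) × (ℕ → Bool) → α := f ∘ cantorProdHomeomorph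
  have hF : F.Injective := hinj.comp cantorProdHomeomorph.injective
  have hcont (x) : Continuous fun y => F (x, y) := by fun_prop
  refine ⟨fun x => range fun y => F (x, y), fun x => ⟨?_, ?_, range_nonempty _, ?_⟩, ?_⟩
  · rintro _ ⟨y, rfl⟩
    exact hfP (mem_range_self _)
  · exact perfect_range (hcont x) (hF.comp (Prod.mk_right_injective x))
  · exact isCompact_range (hcont x)
  · intro x x' hx
    refine disjoint_left.2 ?_
    rintro _ ⟨y, rfl⟩ ⟨y', hy'⟩
    exact hx (congrArg Prod.fst (hF hy')).symm

theorem exists_perfect_subset_measure_zero [MeasurableSpace α] [BorelSpace α] (μ : Measure α)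
    [SFinite μ] (hP : Perfect P) (hne : P.Nonempty) :
    ∃ Q ⊆ P, Perfect Q ∧ Q.Nonempty ∧ IsCompact Q ∧ μ Q = 0 := by
  obtain ⟨Q, hQ, hdisj⟩ := exists_pairwise_disjoint_perfect_subsets hP hne
  have hcount : {x | 0 < μ (Q x)}.Countable :=
    countable_meas_pos_of_disjoint_iUnion (fun x => (hQ x).2.1.closed.measurableSet) hdisj
  have : Uncountable (ℕ → Bool) := by
    rw [← aleph0_lt_mk_iff, mk_nat_arrow_bool]
    exact aleph0_lt_continuum
  obtain ⟨x, hx⟩ : ∃ x, x ∉ {x | 0 < μ (Q x)} := by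
    by_contra! hall
    exact not_countable_univ (eq_univ_of_forall hall ▸ hcount)
  obtain ⟨hQP, hperf, hQne, hcomp⟩ := hQ x
  exact ⟨Q x, hQP, hperf, hQne, hcomp, by simpa using hx⟩

theorem exists_perfect_subset_inter_eq_empty (hP : Perfect P) (hne : P.Nonempty) {A : Set α}
    (hA : #↑(P ∩ A) < 𝔠) : ∃ Q ⊆ P, Perfect Q ∧ Q.Nonempty ∧ Q ∩ A = ∅ := by
  obtain ⟨Q, hQ, hdisj⟩ := exists_pairwise_disjoint_perfect_subsets hP hne
  by_contra! hmeets
  choose a ha using fun x => hmeets (Q x) (hQ x).1 (hQ x).2.1 (hQ x).2.2.1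
  let a' : (ℕ → Bool) → ↑(P ∩ A) := fun x => ⟨a x, (hQ x).1 (ha x).1, (ha x).2⟩
  have hinj : a'.Injective := by
    intro x y hxy
    have hval : a x = a y := congrArg Subtype.val hxy
    exact hdisj.eq (not_disjoint_iff.2 ⟨a x, (ha x).1, hval ▸ (ha y).1⟩)
  have hcard := lift_mk_le_lift_mk_of_injective hinj
  rw [mk_nat_arrow_bool, lift_continuum, lift_uzero] at hcard
  exact hcard.not_gt hA

theorem mk_le_continuum_of_polishSpace (α : Type*) [TopologicalSpace α] [PolishSpace α] :
    #α ≤ 𝔠 := by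
  cases isEmpty_or_nonempty α
  · simp
  · obtain ⟨f, -, hf⟩ := PolishSpace.exists_nat_nat_continuous_surjective α
    simpa using lift_mk_le_lift_mk_of_surjective hf

theorem mk_set_le_continuum (A : Set α) : #A ≤ 𝔠 :=
  (mk_set_le A).trans (mk_le_continuum_of_polishSpace α)

end PerfectSets

section Groups

theorem eventually_ae_add_left_notMem {G : Type*} [AddGroup G] [MeasurableSpace G]
    [MeasurableAdd G] {μ : Measure G} [μ.IsAddLeftInvariant] {N : Set G} (hN : μ N = 0) (g : G) :
    ∀ᵐ s ∂μ, g + s ∉ N := by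
  have hpre : μ ((g + ·) ⁻¹' N) = 0 := (measure_preimage_add μ g N).trans hN
  exact measure_eq_zero_iff_ae_notMem.1 hpre

variable {E : Type u} [AddGroup E] [TopologicalSpace E] [IsTopologicalAddGroup E]

theorem eventually_residual_add_right_mem {U : Set E} (hU : U ∈ residual E) (s : E) :
    ∀ᶠ l in residual E, l + s ∈ U :=
  tendsto_residual_of_isOpenMap (continuous_add_const s) (isOpenMap_add_right s) hU

variable [MeasurableSpace E] [BorelSpace E] {μ : Measure E} [μ.IsAddLeftInvariant]

theorem exists_isOpen_mem_measure_lt_of_add_mem [μ.OuterRegular] {Q : Set E} (hQ : IsCompact Q)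
    (hQ0 : μ Q = 0) {ε : ENNReal} (hε : 0 < ε) (d : E) :
    ∃ V W : Set E, IsOpen V ∧ d ∈ V ∧ μ W < ε ∧ ∀ l ∈ V, ∀ s, l + s ∈ Q → s ∈ W := by
  obtain ⟨O, hQO, hO, hOε⟩ := Q.exists_isOpen_lt_of_lt ε (hQ0 ▸ hε)
  obtain ⟨N, hN, hNO⟩ := compact_open_separated_add_left hQ hO hQO
  refine ⟨(fun l => d - l) ⁻¹' interior N, (d + ·) ⁻¹' O,
    isOpen_interior.preimage (by fun_prop), ?_, ?_, fun l hl s hls => ?_⟩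
  · simpa using mem_interior_iff_mem_nhds.2 hN
  · rwa [measure_preimage_add]
  · have hsplit : d + s = (d - l) + (l + s) := by simp [← add_assoc]
    rw [mem_preimage, hsplit]
    exact hNO (add_mem_add (interior_subset hl) hls)

theorem eventually_residual_prod_ae_add_notMem [TopologicalSpace.SeparableSpace E]
    [μ.OuterRegular] {Q : Set E} (hQ : IsCompact Q) (hQ0 : μ Q = 0) :
    ∀ᶠ p in residual E ×ˢ ae μ, p.1 + p.2 ∉ Q := by
  obtain ⟨δ, hδ, hδsum⟩ := ENNReal.exists_pos_sum_of_countable' (ι := ℕ) one_ne_zero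
  -- Each point of a dense sequence recurs infinitely often, so every tail of `d` is dense.
  let d : ℕ → E := fun n => TopologicalSpace.denseSeq E n.unpair.1
  choose V W hV hdV hW hVW using fun n =>
    exists_isOpen_mem_measure_lt_of_add_mem hQ hQ0 (hδ n) (d n)
  have hcomeagre : ∀ᶠ l in residual E, ∃ᶠ n in atTop, l ∈ V n := by
    simp only [frequently_atTop]
    refine eventually_countable_forall.2 fun k => ?_
    refine mem_of_superset (residual_of_dense_open (s := ⋃ n ≥ k, V n)
      (isOpen_biUnion fun n _ => hV n) ?_) fun l hl => by simpa using hl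
    refine (TopologicalSpace.denseRange_denseSeq E).mono ?_
    rintro _ ⟨j, rfl⟩
    refine mem_iUnion₂.2 ⟨Nat.pair j k, Nat.right_le_pair j k, ?_⟩
    simpa [d] using hdV (Nat.pair j k)
  have hconull : ∀ᵐ s ∂μ, ∀ᶠ n in atTop, s ∉ W n :=
    ae_eventually_notMem (ne_top_of_le_ne_top (hδsum.trans_le le_top).ne
      (ENNReal.tsum_le_tsum fun n => (hW n).le))
  filter_upwards [hcomeagre.prod_mk hconull] with p ⟨hl, hs⟩ hQp
  obtain ⟨n, hlV, hsW⟩ := (hl.and_eventually hs).exists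
  exact hsW (hVW n p.1 hlV p.2 hQp)

theorem disjoint_residual_ae [TopologicalSpace.SeparableSpace E] [μ.OuterRegular] {q : E}
    (hq : μ {q} = 0) : Disjoint (residual E) (ae μ) := by
  obtain ⟨G, hG, H, hH, hGH⟩ :=
    mem_prod_iff.1 (eventually_residual_prod_ae_add_notMem isCompact_singleton hq)
  have hreflect : Tendsto (fun s => q - s) (residual E) (residual E) :=
    tendsto_residual_of_isOpenMap (by fun_prop) (Homeomorph.subLeft q).isOpenMap
  refine Filter.disjoint_iff.2 ⟨_, hreflect hG, H, hH, disjoint_left.2 fun s hsG hsH => ?_⟩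
  exact hGH (mk_mem_prod hsG hsH) (sub_add_cancel q s)

variable {L S : Set E}

theorem mk_eq_continuum_iff_of_isLuzinAlong [PolishSpace E] [μ.OuterRegular]
    (hreg : continuum.{u}.IsRegular) {q : E} (hq : μ {q} = 0)
    (hL : IsLuzinAlong (residual E) L) (hS : IsLuzinAlong (ae μ) S) : #L = 𝔠 ↔ #S = 𝔠 := by
  obtain ⟨U, hU, H, hH, hUH⟩ := Filter.disjoint_iff.1 (disjoint_residual_ae hq)
  have hU0 : μ U = 0 := measure_mono_null hUH.subset_compl_right hH
  have hres (s) : ∀ᶠ l in residual E, l + s ∈ U := eventually_residual_add_right_mem hU s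
  have hae (l) : ∀ᵐ s ∂μ, l + s ∉ U := eventually_ae_add_left_notMem hU0 l
  constructor
  · intro hLc
    have hLS : #L ≤ #S := hS.mk_le_mk (R := fun s l => l + s ∉ U) hL (hLc ▸ hreg) hae
      fun s => (hres s).mono fun _ => not_not_intro
    exact (mk_set_le_continuum S).antisymm (hLc ▸ hLS)
  · intro hSc
    have hSL : #S ≤ #L := hL.mk_le_mk hS (hSc ▸ hreg) hres hae
    exact (mk_set_le_continuum L).antisymm (hSc ▸ hSL)

theorem mk_inter_add_lt_continuum [PolishSpace E] [μ.OuterRegular] [μ.IsOpenPosMeasure]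
    (hreg : continuum.{u}.IsRegular) (hL : IsLuzinAlong (residual E) L) (hS : IsLuzinAlong (ae μ) S)
    {Q : Set E} (hQ : IsCompact Q) (hne : Q.Nonempty) (hQ0 : μ Q = 0) :
    #↑(Q ∩ (L + S)) < 𝔠 := by
  obtain ⟨q, hq⟩ := hne
  have hiff := mk_eq_continuum_iff_of_isLuzinAlong hreg
    (measure_mono_null (singleton_subset_iff.2 hq) hQ0) hL hS
  by_cases hLc : #L = 𝔠
  · have hmeagre : Qᶜ ∈ residual E := IsMeagre.of_isSigmaCompact_null hQ.isSigmaCompact hQ0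
    have hpairs : #↑(L ×ˢ S ∩ {p | p.1 + p.2 ∈ Q}) < #L :=
      hL.mk_prod_inter_lt (R := fun l s => l + s ∈ Q) hS (hLc ▸ hreg)
        (hLc.trans (hiff.1 hLc).symm) (eventually_residual_add_right_mem hmeagre)
        (eventually_ae_add_left_notMem hQ0) (eventually_residual_prod_ae_add_notMem hQ hQ0)
    have himage : Q ∩ (L + S) ⊆ (fun p => p.1 + p.2) '' (L ×ˢ S ∩ {p | p.1 + p.2 ∈ Q}) := by
      rintro _ ⟨hlsQ, l, hl, s, hs, rfl⟩
      exact ⟨(l, s), ⟨⟨hl, hs⟩, hlsQ⟩, rfl⟩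
    exact hLc ▸ (mk_le_mk_of_subset himage).trans_lt (mk_image_le.trans_lt hpairs)
  · have hL_lt : #L < 𝔠 := (mk_set_le_continuum L).lt_of_ne hLc
    have hS_lt : #S < 𝔠 := (mk_set_le_continuum S).lt_of_ne (hiff.not.1 hLc)
    exact (mk_le_mk_of_subset inter_subset_right).trans_lt
      (mk_add_le.trans_lt (mul_lt_of_lt hreg.aleph0_le hL_lt hS_lt))

end Groups

theorem stmt16_general {E : Type u} [AddGroup E] [TopologicalSpace E] [IsTopologicalAddGroup E]
    [LocallyCompactSpace E] [PolishSpace E] [MeasurableSpace E] [BorelSpace E] (μ : Measure E)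
    [μ.IsAddHaarMeasure] (hreg : continuum.{u}.IsRegular) {L S : Set E}
    (hL : IsLuzinAlong (residual E) L) (hS : IsLuzinAlong (ae μ) S) :
    ∀ P : Set E, Perfect P → P.Nonempty →
      ∃ Q ⊆ P, Perfect Q ∧ Q.Nonempty ∧ Q ∩ (L + S) = ∅ := by
  intro P hP hne
  obtain ⟨N, hNP, hN, hNne, hNc, hN0⟩ := exists_perfect_subset_measure_zero μ hP hne
  have hsmall := mk_inter_add_lt_continuum hreg hL hS hNc hNne hN0
  obtain ⟨Q, hQN, hQ⟩ := exists_perfect_subset_inter_eq_empty hN hNne hsmall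
  exact ⟨Q, hQN.trans hNP, hQ⟩

open Pointwise in
/-- if 𝔠 is regular then L + S is s₀-small in ℝ. -/
theorem stmt16 (hreg : Cardinal.continuum.IsRegular)
    (L S : Set ℝ) (hL : IsGenLuzin L) (hS : IsGenSierpinski S) :
    ∀ P : Set ℝ, Perfect P → P.Nonempty →
      ∃ Q ⊆ P, Perfect Q ∧ Q.Nonempty ∧ Q ∩ (L + S) = ∅ :=
  stmt16_general volume (isRegular_continuum_congr_univ.1 hreg) hL
    fun N hN => hS N (compl_mem_ae_iff.1 hN)
end
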